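/- Let n ≥ d ≥ 2 be integers and κ ≥ 1. Let Φ : {1,…,d}^n → Δ_d be an estimator such that, writing P̂_n = Φ(X_1, …, X_n) for an i.i.d. sample from P, for every P ∈ Δ_d the event {χ²(P, P̂_n) ≤ κd/n} has positive probability. Then for every δ ∈ (e^{-n}, e^{-6.32κ}) there exists a distribution P ∈ Δ_d such that the probability that χ²(P, P̂_n) ≥ (0.04/κ) · log²(1/δ)/n is at least δ. -/

import Mathlib

open Finset
open scoped ENNReal

/-- Probability of an event `E` under an i.i.d. sample of size `n` from the
distribution `p` on `{1, …, d}`. -/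
noncomputable def sampleProb {n d : ℕ} (p : Fin d → ℝ) (E : Set (Fin n → Fin d)) : ℝ :=
  ∑ x : Fin n → Fin d, Set.indicator E (fun y => ∏ i, p (y i)) x

/-- χ²-divergence, valued in `ℝ≥0∞`: a term with `q j = 0` and `p j ≠ q j`
contributes `+∞` (and contributes `0` if `p j = q j`). -/
noncomputable def chiSqE {d : ℕ} (p q : Fin d → ℝ) : ℝ≥0∞ :=
  ∑ j, ENNReal.ofReal ((p j - q j) ^ 2) / ENNReal.ofReal (q j)

theorem exists_small (n d : ℕ) (hn : 0 < n) (hd : 2 ≤ d) (κ : ℝ) (hκ : 1 ≤ κ) (j : Fin d)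
    (q : Fin d → ℝ) (hq : ∀ i, 0 ≤ q i)
    (h : chiSqE (fun i => if i = j then 1 else 0) q ≤ ENNReal.ofReal (κ * d / n)) :
    ∃ i, i ≠ j ∧ q i ≤ 2 * κ / n := by
  by_contra hcon
  push Not at hcon
  have hn' : (0 : ℝ) < n := by exact_mod_cast hn
  have hpos : 0 < 2 * κ / n := by positivity
  have h1 : ENNReal.ofReal (∑ i ∈ univ.erase j, q i) ≤
      chiSqE (fun i => if i = j then 1 else 0) q := by
    rw [ENNReal.ofReal_sum_of_nonneg (fun i _ => hq i)]
    unfold chiSqE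
    refine le_trans (Finset.sum_le_sum (fun i hi => ?_))
      (Finset.sum_le_sum_of_subset (Finset.subset_univ (univ.erase j)))
    have hij : i ≠ j := Finset.ne_of_mem_erase hi
    have hqi : 0 < q i := hpos.trans (hcon i hij)
    rw [← ENNReal.ofReal_div_of_pos hqi]
    apply ENNReal.ofReal_le_ofReal
    simp only [hij, if_false]
    rw [le_div_iff₀ hqi]
    nlinarith
  have hnon : (univ.erase j : Finset (Fin d)).Nonempty := by
    rw [← Finset.card_pos, Finset.card_erase_of_mem (mem_univ j)]
    simp; omega
  have h2 : ∑ i ∈ univ.erase j, (2 * κ / n) < ∑ i ∈ univ.erase j, q i :=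
    Finset.sum_lt_sum_of_nonempty hnon (fun i hi => hcon i (Finset.ne_of_mem_erase hi))
  rw [Finset.sum_const, Finset.card_erase_of_mem (mem_univ j), card_univ, Fintype.card_fin,
    nsmul_eq_mul, Nat.cast_sub (by omega)] at h2
  have h3 := (ENNReal.ofReal_le_ofReal_iff (by positivity)).1 (h1.trans h)
  have hd' : (2 : ℝ) ≤ d := by exact_mod_cast hd
  have h4 : κ * d / n ≤ ((d : ℝ) - 1) * (2 * κ / n) := by
    rw [← mul_div_assoc]
    gcongr ?_ / _
    nlinarith
  push_cast at h2
  linarith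

theorem const_mem (n d : ℕ) (j : Fin d) (E : Set (Fin n → Fin d))
    (h : 0 < sampleProb (fun i => if i = j then 1 else 0) E) : (fun _ => j) ∈ E := by
  by_contra hcon
  unfold sampleProb at h
  rw [Finset.sum_eq_zero] at h
  · exact lt_irrefl _ h
  intro x _
  by_cases hx : x ∈ E
  · rw [Set.indicator_of_mem hx]
    have : ∃ k, x k ≠ j := by
      by_contra hh
      push Not at hh
      exact hcon ((funext hh : x = fun _ => j) ▸ hx)
    obtain ⟨k, hk⟩ := this
    exact Finset.prod_eq_zero (mem_univ k) (by simp [hk])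
  · exact Set.indicator_of_notMem hx _

theorem exp_chord (u : ℝ) (h0 : 0 ≤ u) (h1 : u ≤ 1) : Real.exp (-u) ≤ 1 - 0.62 * u := by
  have h := convexOn_exp.2 (Set.mem_univ (0 : ℝ)) (Set.mem_univ (-1 : ℝ))
    (by linarith : 0 ≤ 1 - u) h0 (by ring)
  simp only [smul_eq_mul, mul_zero, zero_add, Real.exp_zero, mul_neg, mul_one] at h
  have := Real.exp_neg_one_lt_d9
  nlinarith

theorem lower_bound_conf_indep_tail (n d : ℕ) (hdn : d ≤ n) (hd : 2 ≤ d)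
    (κ : ℝ) (hκ : 1 ≤ κ)
    (Φ : (Fin n → Fin d) → (Fin d → ℝ))
    (hΦ : ∀ x, (∀ j, 0 ≤ Φ x j) ∧ ∑ j, Φ x j = 1)
    (hgood : ∀ p : Fin d → ℝ, (∀ j, 0 ≤ p j) → ∑ j, p j = 1 →
      0 < sampleProb p {x | chiSqE p (Φ x) ≤ ENNReal.ofReal (κ * d / n)})
    (δ : ℝ) (hδl : Real.exp (-(n : ℝ)) < δ) (hδu : δ < Real.exp (-(6.32 * κ))) :
    ∃ p : Fin d → ℝ, (∀ j, 0 ≤ p j) ∧ (∑ j, p j = 1) ∧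
      δ ≤ sampleProb p {x |
        ENNReal.ofReal ((0.04 / κ) * (Real.log (1 / δ) ^ 2 / n)) ≤
          chiSqE p (Φ x)} := by
  have hn : 0 < n := by omega
  have hn' : (0 : ℝ) < n := by exact_mod_cast hn
  have hδ : 0 < δ := (Real.exp_pos _).trans hδl
  set L := Real.log (1 / δ) with hL
  have hLe : L = - Real.log δ := by rw [hL, one_div, Real.log_inv]
  have hLn : L < n := by
    have := (Real.lt_log_iff_exp_lt hδ).2 hδl
    linarith
  have hLk : 6.32 * κ < L := by
    have := (Real.log_lt_iff_lt_exp hδ).2 hδu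
    linarith
  have hL0 : 0 < L := by linarith
  have j : Fin d := ⟨0, by omega⟩
  have hc := const_mem n d j _ (hgood (fun i => if i = j then 1 else 0)
    (fun i => by split_ifs <;> norm_num) (by simp))
  obtain ⟨i, hij, hi⟩ := exists_small n d hn hd κ hκ j _ (hΦ _).1 hc
  have hq0 := (hΦ (fun _ => j)).1 i
  set q := Φ (fun _ => j) i with hq
  set e := Real.exp (-(L / n)) with he
  have he0 : 0 < e := Real.exp_pos _
  have hu1 : L / n ≤ 1 := by rw [div_le_one hn']; exact hLn.le
  have hu0 : 0 < L / n := by positivity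
  have hch : e ≤ 1 - 0.62 * (L / n) := exp_chord _ hu0.le hu1
  have hpow : e ^ n = δ := by
    rw [he, ← Real.exp_nat_mul, mul_neg, mul_div_cancel₀ _ hn'.ne', hLe, neg_neg,
      Real.exp_log hδ]
  let p : Fin d → ℝ := fun k => if k = j then e else if k = i then 1 - e else 0
  have hpj : p j = e := by simp [p]
  have hpi : p i = 1 - e := by simp [p, hij]
  have hp0 : ∀ k, 0 ≤ p k := by
    intro k
    simp only [p]
    split_ifs <;> nlinarith
  refine ⟨p, hp0, ?_, ?_⟩
  · rw [← Finset.add_sum_erase _ _ (mem_univ j), hpj,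
      Finset.sum_eq_single_of_mem i (by simp [hij]), hpi]
    · ring
    · intro k hk hki
      simp [p, Finset.ne_of_mem_erase hk, hki]
  · have hmem : (fun _ => j) ∈ {x | ENNReal.ofReal ((0.04 / κ) * (L ^ 2 / n)) ≤
        chiSqE p (Φ x)} := by
      rw [Set.mem_ofPred_eq]
      unfold chiSqE
      refine le_trans ?_ (Finset.single_le_sum (fun _ _ => zero_le) (mem_univ i))
      rw [hpi, ← hq]
      have hκu : 2 * κ / n ≤ 0.317 * (L / n) := by
        rw [← mul_div_assoc]
        gcongr ?_ / _
        linarith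
      have hdiff : 0.303 * (L / n) ≤ 1 - e - q := by linarith
      have hsq : (0.303 * (L / n)) ^ 2 ≤ (1 - e - q) ^ 2 := by gcongr
      have hsqp : 0 < (1 - e - q) ^ 2 := lt_of_lt_of_le (by positivity) hsq
      rw [ENNReal.le_div_iff_mul_le (Or.inr (ENNReal.ofReal_pos.2 hsqp).ne') (Or.inl ENNReal.ofReal_ne_top),
        ← ENNReal.ofReal_mul (by positivity)]
      apply ENNReal.ofReal_le_ofReal
      refine le_trans ?_ hsq
      calc (0.04 / κ) * (L ^ 2 / n) * q ≤ (0.04 / κ) * (L ^ 2 / n) * (2 * κ / n) := by gcongr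
        _ = 0.08 * (L / n) ^ 2 := by
          have : κ ≠ 0 := by positivity
          field_simp
          norm_num
        _ ≤ _ := by rw [mul_pow]; gcongr; norm_num
    unfold sampleProb
    refine le_trans ?_ (Finset.single_le_sum
      (fun x _ => Set.indicator_nonneg (fun y _ => Finset.prod_nonneg fun k _ => hp0 _) x)
      (mem_univ (fun _ => j)))
    rw [Set.indicator_of_mem hmem]
    simp [hpj, hpow]
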